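/- arXiv:2306.12162 — 2 statements merged into one kernel-verified Lean document; each statement's English description precedes it below -/
import Mathlib

section
/- In the gluing setup, the function d = p ∪ ⋃𝔉 is a graph pseudometric, i.e., d(xy) = d̂(x,y) for every edge xy ∈ E_d. -/
open scoped Classical

universe u

namespace GraphMetricPaper

variable {X : Type u}

/-- The vertex set `V = ⋃ E` of a graph given by an adjacency relation `E`. -/
def Vtx (E : X → X → Prop) : Set X := {x | ∃ y, E x y}

/-- Two points are joined by a walk in the graph `E`. -/
def Joined (E : X → X → Prop) (x y : X) : Prop :=
  ∃ (n : ℕ) (c : ℕ → X), c 0 = x ∧ c n = y ∧ ∀ i, i < n → E (c i) (c (i + 1))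

/-- The set of weights of walks from `x` to `y`. -/
def walkSums (E : X → X → Prop) (d : X → X → ℝ) (x y : X) : Set ℝ :=
  {s | ∃ (n : ℕ) (c : ℕ → X), c 0 = x ∧ c n = y ∧ (∀ i, i < n → E (c i) (c (i + 1))) ∧
    s = ∑ i ∈ Finset.range n, d (c i) (c (i + 1))}

/-- The shortest-path pseudometric `d̂` determined by a weight function `d` on a graph `E`. -/
noncomputable def hatd (E : X → X → Prop) (d : X → X → ℝ) (x y : X) : ℝ :=
  sInf (walkSums E d x y)

/-- The function `ď` bounding the possible extensions of `d` from below: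
`ď(x,y) = sup_{ab ∈ E} max {0, d(ab) - d̂(a,x) - d̂(y,b)}`. -/
noncomputable def checkd (E : X → X → Prop) (d : X → X → ℝ) (x y : X) : ℝ :=
  sSup ({0} ∪ {r | ∃ a b, E a b ∧ r = d a b - hatd E d a x - hatd E d y b})

/-- The pseudometric `d̈` on doubletons:
`d̈(xy,uv) = min {d̂(x,u) + d̂(y,v), d̂(x,v) + d̂(y,u)}`. -/
noncomputable def ddot (E : X → X → Prop) (d : X → X → ℝ) (x y u v : X) : ℝ :=
  min (hatd E d x u + hatd E d y v) (hatd E d x v + hatd E d y u)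

/-- `d` is a graph pseudometric with edge relation `E`:  `E` is a (symmetric, irreflexive)
connected graph, `d` is a nonnegative symmetric weight on the edges, and `d = d̂` on edges. -/
structure IsGraphPseudometric (E : X → X → Prop) (d : X → X → ℝ) : Prop where
  symm : ∀ ⦃a b⦄, E a b → E b a
  irrefl : ∀ a, ¬ E a a
  wt_symm : ∀ ⦃a b⦄, E a b → d a b = d b a
  nonneg : ∀ ⦃a b⦄, E a b → 0 ≤ d a b
  connected : ∀ x ∈ Vtx E, ∀ y ∈ Vtx E, Joined E x y
  edge_eq : ∀ ⦃a b⦄, E a b → d a b = hatd E d a b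

/-- A graph metric is a graph pseudometric with strictly positive weights. -/
def IsGraphMetric (E : X → X → Prop) (d : X → X → ℝ) : Prop :=
  IsGraphPseudometric E d ∧ ∀ ⦃a b⦄, E a b → 0 < d a b

/-- A floppy graph pseudometric: `ď(x,y) < d̂(x,y)` for every `xy ∈ [V]² \ E`. -/
def FloppyPseudometric (E : X → X → Prop) (d : X → X → ℝ) : Prop :=
  IsGraphPseudometric E d ∧
    ∀ x ∈ Vtx E, ∀ y ∈ Vtx E, x ≠ y → ¬ E x y → checkd E d x y < hatd E d x y

/-- A floppy graph metric: `ď(x,y) < d̂(x,y)` for every `xy ∈ [V]² \ E`. -/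
def FloppyMetric (E : X → X → Prop) (d : X → X → ℝ) : Prop :=
  IsGraphMetric E d ∧
    ∀ x ∈ Vtx E, ∀ y ∈ Vtx E, x ≠ y → ¬ E x y → checkd E d x y < hatd E d x y

/-- The edge relation of the one-step extension `E ∪ {xy}`. -/
def extEdge (E : X → X → Prop) (x y : X) : X → X → Prop :=
  fun a b => E a b ∨ (a = x ∧ b = y) ∨ (a = y ∧ b = x)

/-- The weight function of the one-step extension `d ∪ {⟨xy, r⟩}`. -/
noncomputable def extWt (d : X → X → ℝ) (x y : X) (r : ℝ) : X → X → ℝ :=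
  fun a b => if (a = x ∧ b = y) ∨ (a = y ∧ b = x) then r else d a b

/-- The set `[V]² \ E` of unordered pairs of distinct vertices that are not edges. -/
def nonEdgePairs (E : X → X → Prop) : Set (Sym2 X) :=
  {e | ∃ a b : X, e = s(a, b) ∧ a ≠ b ∧ a ∈ Vtx E ∧ b ∈ Vtx E ∧ ¬ E a b}

/-- A set of (unordered) weighted pairs, presented as a relation `R`, is a full metric
on `V`: it is symmetric, its domain is exactly `[V]²`, it is single-valued, positive,
and satisfies the triangle inequality. -/
def IsFullMetricRel (V : Set X) (R : X → X → ℝ → Prop) : Prop :=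
  (∀ a b r, R a b r → R b a r) ∧
  (∀ a b r, R a b r → a ∈ V ∧ b ∈ V ∧ a ≠ b) ∧
  (∀ a b, a ∈ V → b ∈ V → a ≠ b → ∃ r, R a b r) ∧
  (∀ a b r s, R a b r → R a b s → r = s) ∧
  (∀ a b r, R a b r → 0 < r) ∧
  (∀ a b c r s t, R a b r → R b c s → R a c t → t ≤ r + s)

/-- A weight function `D` on `[V]²` is a full metric on `V`. -/
def IsFullMetricOn (V : Set X) (D : X → X → ℝ) : Prop :=
  (∀ a b, a ∈ V → b ∈ V → a ≠ b → D a b = D b a) ∧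
  (∀ a b, a ∈ V → b ∈ V → a ≠ b → 0 < D a b) ∧
  (∀ a b c, a ∈ V → b ∈ V → c ∈ V → a ≠ b → b ≠ c → a ≠ c → D a c ≤ D a b + D b c)

/-- Player I has a winning strategy in the metric-extending game `Game_d(lam, Fam)`:
there are functions `S1, S2` choosing, for each inning `β < lam` and each sequence of
previous answers of player II, a legal doubleton in `[V]²` and a set from `Fam`, such that
for every play of player II respecting the strategy, the resulting relation
`d ∪ {⟨x_α y_α, r_α⟩ : α < lam}` is a full metric on `V`. -/
def WinningStratI (V : Set X) (E : X → X → Prop) (d : X → X → ℝ)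
    (lam : Ordinal.{u}) (Fam : Set (Set ℝ)) : Prop :=
  ∃ (S1 : ∀ β : Ordinal.{u}, β < lam → (∀ α : Ordinal.{u}, α < β → ℝ) → X × X)
    (S2 : ∀ β : Ordinal.{u}, β < lam → (∀ α : Ordinal.{u}, α < β → ℝ) → Set ℝ),
    (∀ β hβ s, S2 β hβ s ∈ Fam) ∧
    (∀ β hβ s, (S1 β hβ s).1 ∈ V ∧ (S1 β hβ s).2 ∈ V ∧ (S1 β hβ s).1 ≠ (S1 β hβ s).2) ∧
    (∀ s : ∀ α : Ordinal.{u}, α < lam → ℝ,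
      (∀ α (hα : α < lam), s α hα ∈ S2 α hα (fun γ hγ => s γ (hγ.trans hα))) →
      IsFullMetricRel V (fun a b r =>
        (E a b ∧ r = d a b) ∨
        ∃ α, ∃ hα : α < lam,
          ((a = (S1 α hα (fun γ hγ => s γ (hγ.trans hα))).1 ∧
            b = (S1 α hα (fun γ hγ => s γ (hγ.trans hα))).2) ∨
           (a = (S1 α hα (fun γ hγ => s γ (hγ.trans hα))).2 ∧
            b = (S1 α hα (fun γ hγ => s γ (hγ.trans hα))).1)) ∧
          r = s α hα))

/-- Player II has a winning strategy in the metric-extending game `Game_d(lam, Fam)`: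
there is a function `T` assigning to each inning `β < lam` and each sequence of moves of
player I (of length `β + 1`) an answer in the set component of the last move, such that
for every legal play of player I, the resulting relation is not a full metric on `V`. -/
def WinningStratII (V : Set X) (E : X → X → Prop) (d : X → X → ℝ)
    (lam : Ordinal.{u}) (Fam : Set (Set ℝ)) : Prop :=
  ∃ T : ∀ β : Ordinal.{u}, β < lam → (∀ α : Ordinal.{u}, α ≤ β → (X × X) × Set ℝ) → ℝ,
    (∀ β hβ p, (p β le_rfl).2 ∈ Fam → T β hβ p ∈ (p β le_rfl).2) ∧
    (∀ p : ∀ α : Ordinal.{u}, α < lam → (X × X) × Set ℝ,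
      (∀ α hα, (p α hα).1.1 ∈ V ∧ (p α hα).1.2 ∈ V ∧ (p α hα).1.1 ≠ (p α hα).1.2 ∧
        (p α hα).2 ∈ Fam) →
      ¬ IsFullMetricRel V (fun a b r =>
        (E a b ∧ r = d a b) ∨
        ∃ α, ∃ hα : α < lam,
          ((a = (p α hα).1.1 ∧ b = (p α hα).1.2) ∨
           (a = (p α hα).1.2 ∧ b = (p α hα).1.1)) ∧
          r = T α hα (fun γ hγ => p γ (lt_of_le_of_lt hγ hα))))

/-- The edge relation of the glued graph `E_d = E_p ∪ ⋃_{f ∈ F} E_f`. -/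
def gluedEdge (Ep : X → X → Prop) (F : Set ((X → X → Prop) × (X → X → ℝ))) :
    X → X → Prop :=
  fun a b => Ep a b ∨ ∃ f ∈ F, f.1 a b

/-- `Λ(v; B) = inf {d̂(a,v) + d̂(v,b) - d̂(a,b) : a, b ∈ B}`. -/
noncomputable def Lam (E : X → X → Prop) (d : X → X → ℝ) (v : X) (B : Set X) : ℝ :=
  sInf {r | ∃ a ∈ B, ∃ b ∈ B, r = hatd E d a v + hatd E d v b - hatd E d a b}

/-- The gluing setup: a graph pseudometric `p = (Ep, wp)` and a family `F` of graph
pseudometrics such that each member meets `V_p`, agrees with `p̂` on the intersection of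
the vertex sets, and distinct members only meet inside `V_p`; `wd` is the glued weight
function `d = p ∪ ⋃ F` on `E_d = E_p ∪ ⋃_{f ∈ F} E_f`. -/
structure GluingSetup (Ep : X → X → Prop) (wp : X → X → ℝ)
    (F : Set ((X → X → Prop) × (X → X → ℝ))) (wd : X → X → ℝ) : Prop where
  hp : IsGraphPseudometric Ep wp
  hF : ∀ f ∈ F, IsGraphPseudometric f.1 f.2
  meet : ∀ f ∈ F, (Vtx f.1 ∩ Vtx Ep).Nonempty
  agree : ∀ f ∈ F, ∀ x ∈ Vtx f.1 ∩ Vtx Ep, ∀ y ∈ Vtx f.1 ∩ Vtx Ep, x ≠ y →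
    hatd f.1 f.2 x y = hatd Ep wp x y
  inter_sub : ∀ f ∈ F, ∀ g ∈ F, f ≠ g → Vtx f.1 ∩ Vtx g.1 ⊆ Vtx Ep
  wd_p : ∀ ⦃a b⦄, Ep a b → wd a b = wp a b
  wd_F : ∀ f ∈ F, ∀ ⦃a b⦄, f.1 a b → wd a b = f.2 a b


theorem joined_iff_reflTransGen {E : X → X → Prop} {x y : X} :
    Joined E x y ↔ Relation.ReflTransGen E x y := by
  constructor
  · rintro ⟨n, c, rfl, rfl, h⟩
    induction n with
    | zero => exact .refl
    | succ n ih => exact (ih fun i hi => h i (by omega)).tail (h n (by omega))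
  · intro h
    induction h with
    | refl => exact ⟨0, fun _ => x, rfl, rfl, by simp⟩
    | @tail y z _ hyz ih =>
      obtain ⟨n, c, h0, hn, hc⟩ := ih
      refine ⟨n + 1, fun i => if i ≤ n then c i else z, by simpa using h0, by simp, ?_⟩
      intro i hi
      rcases Nat.lt_succ_iff_lt_or_eq.mp hi with h | rfl
      · simpa [h.le, Nat.succ_le_of_lt h] using hc i h
      · simpa [hn] using hyz

section Walks

variable {E : X → X → Prop} {d : X → X → ℝ} {x y z : X} {s t : ℝ}

theorem zero_mem_walkSums : (0 : ℝ) ∈ walkSums E d x x :=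
  ⟨0, fun _ => x, rfl, rfl, by simp, by simp⟩

theorem add_edge_mem_walkSums (h : s ∈ walkSums E d x y) (hyz : E y z) :
    s + d y z ∈ walkSums E d x z := by
  obtain ⟨n, c, h0, hn, hc, rfl⟩ := h
  refine ⟨n + 1, fun i => if i ≤ n then c i else z, by simpa using h0, by simp, ?_, ?_⟩
  · intro i hi
    rcases Nat.lt_succ_iff_lt_or_eq.mp hi with h | rfl
    · simpa [h.le, Nat.succ_le_of_lt h] using hc i h
    · simpa [hn] using hyz
  · rw [Finset.sum_range_succ]
    congr 1
    · refine Finset.sum_congr rfl fun i hi => ?_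
      have h := Finset.mem_range.mp hi
      simp [h.le, Nat.succ_le_of_lt h]
    · simp [hn]

/-- Induction on walks with a fixed starting point, adding one edge at the end. -/
theorem walkSums_induction {P : X → ℝ → Prop} (zero : P x 0)
    (step : ∀ ⦃y z s⦄, s ∈ walkSums E d x y → P y s → E y z → P z (s + d y z))
    (h : s ∈ walkSums E d x y) : P y s := by
  obtain ⟨n, c, rfl, rfl, hc, rfl⟩ := h
  induction n with
  | zero => simpa using zero
  | succ n ih =>
    have hc' : ∀ i, i < n → E (c i) (c (i + 1)) := fun i hi => hc i (by omega)
    rw [Finset.sum_range_succ]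
    exact step ⟨n, c, rfl, rfl, hc', rfl⟩ (ih hc') (hc n (by omega))

theorem add_mem_walkSums (hs : s ∈ walkSums E d x y) (ht : t ∈ walkSums E d y z) :
    s + t ∈ walkSums E d x z := by
  refine walkSums_induction (P := fun z t => s + t ∈ walkSums E d x z) (by simpa using hs) ?_ ht
  intro u v t _ ih huv
  rw [← add_assoc]
  exact add_edge_mem_walkSums ih huv

theorem walkSums_nonempty (h : Joined E x y) : (walkSums E d x y).Nonempty := by
  obtain ⟨n, c, h0, hn, hc⟩ := h
  exact ⟨_, n, c, h0, hn, hc, rfl⟩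

theorem nonneg_of_mem_walkSums (hd : ∀ ⦃a b⦄, E a b → 0 ≤ d a b)
    (h : s ∈ walkSums E d x y) : 0 ≤ s := by
  obtain ⟨n, c, -, -, hc, rfl⟩ := h
  exact Finset.sum_nonneg fun i hi => hd (hc i (Finset.mem_range.mp hi))

theorem hatd_le_of_mem (hd : ∀ ⦃a b⦄, E a b → 0 ≤ d a b)
    (h : s ∈ walkSums E d x y) : hatd E d x y ≤ s :=
  csInf_le ⟨0, fun _ hr => nonneg_of_mem_walkSums hd hr⟩ h

theorem hatd_le_of_edge (hd : ∀ ⦃a b⦄, E a b → 0 ≤ d a b) (h : E x y) :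
    hatd E d x y ≤ d x y :=
  hatd_le_of_mem hd (by simpa using add_edge_mem_walkSums (d := d) zero_mem_walkSums h)

theorem hatd_self (hd : ∀ ⦃a b⦄, E a b → 0 ≤ d a b) : hatd E d x x = 0 :=
  le_antisymm (hatd_le_of_mem hd zero_mem_walkSums)
    (le_csInf ⟨0, zero_mem_walkSums⟩ fun _ hr => nonneg_of_mem_walkSums hd hr)

theorem hatd_triangle (hd : ∀ ⦃a b⦄, E a b → 0 ≤ d a b) (hxy : Joined E x y)
    (hyz : Joined E y z) : hatd E d x z ≤ hatd E d x y + hatd E d y z := by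
  rw [← sub_le_iff_le_add]
  refine le_csInf (walkSums_nonempty hxy) fun s hs => ?_
  rw [sub_le_comm]
  refine le_csInf (walkSums_nonempty hyz) fun t ht => ?_
  linarith [hatd_le_of_mem hd (add_mem_walkSums hs ht)]

end Walks

namespace IsGraphPseudometric

variable {E : X → X → Prop} {d : X → X → ℝ} {x y z : X}

theorem left_mem (_ : IsGraphPseudometric E d) (h : E x y) : x ∈ Vtx E := ⟨y, h⟩

theorem right_mem (hE : IsGraphPseudometric E d) (h : E x y) : y ∈ Vtx E := ⟨x, hE.symm h⟩

theorem triangle (hE : IsGraphPseudometric E d) (hx : x ∈ Vtx E) (hy : y ∈ Vtx E)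
    (hz : z ∈ Vtx E) : hatd E d x z ≤ hatd E d x y + hatd E d y z :=
  hatd_triangle hE.nonneg (hE.connected x hx y hy) (hE.connected y hy z hz)

theorem hatd_le_add_edge (hE : IsGraphPseudometric E d) (hx : x ∈ Vtx E) (h : E y z) :
    hatd E d x z ≤ hatd E d x y + d y z :=
  (hE.triangle hx (hE.left_mem h) (hE.right_mem h)).trans_eq (by rw [hE.edge_eq h])

end IsGraphPseudometric

namespace GluingSetup

variable {Ep : X → X → Prop} {wp : X → X → ℝ} {F : Set ((X → X → Prop) × (X → X → ℝ))}
  {wd : X → X → ℝ} {f : (X → X → Prop) × (X → X → ℝ)} {a b x y : X} {s : ℝ}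

theorem hatd_eq (hs : GluingSetup Ep wp F wd) (hf : f ∈ F) (hx : x ∈ Vtx f.1)
    (hx' : x ∈ Vtx Ep) (hy : y ∈ Vtx f.1) (hy' : y ∈ Vtx Ep) :
    hatd f.1 f.2 x y = hatd Ep wp x y := by
  by_cases hxy : x = y
  · subst hxy
    rw [hatd_self (hs.hF f hf).nonneg, hatd_self hs.hp.nonneg]
  · exact hs.agree f hf x ⟨hx, hx'⟩ y ⟨hy, hy'⟩ hxy

theorem glued_symm (hs : GluingSetup Ep wp F wd) (h : gluedEdge Ep F a b) :
    gluedEdge Ep F b a := by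
  rcases h with h | ⟨f, hf, h⟩
  · exact .inl (hs.hp.symm h)
  · exact .inr ⟨f, hf, (hs.hF f hf).symm h⟩

theorem glued_nonneg (hs : GluingSetup Ep wp F wd) (h : gluedEdge Ep F a b) :
    0 ≤ wd a b := by
  rcases h with h | ⟨f, hf, h⟩
  · rw [hs.wd_p h]
    exact hs.hp.nonneg h
  · rw [hs.wd_F f hf h]
    exact (hs.hF f hf).nonneg h

/-- A walk in the glued graph starting in `V_p` is at least as long as a shortest path in `p`,
followed, if the walk ends in some `V_f`, by a shortest path in `f`. -/
theorem bound_of_mem_walkSums (hs : GluingSetup Ep wp F wd) (ha : a ∈ Vtx Ep)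
    (h : s ∈ walkSums (gluedEdge Ep F) wd a x) :
    (x ∈ Vtx Ep → hatd Ep wp a x ≤ s) ∧
      ∀ f ∈ F, x ∈ Vtx f.1 →
        ∃ y ∈ Vtx f.1 ∩ Vtx Ep, hatd Ep wp a y + hatd f.1 f.2 y x ≤ s := by
  have of_mem : ∀ {z r}, z ∈ Vtx Ep → hatd Ep wp a z ≤ r → ∀ f ∈ F, z ∈ Vtx f.1 →
      ∃ y ∈ Vtx f.1 ∩ Vtx Ep, hatd Ep wp a y + hatd f.1 f.2 y z ≤ r := by
    intro z r hz hr f hf hzf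
    exact ⟨z, ⟨hzf, hz⟩, by rwa [hatd_self (hs.hF f hf).nonneg, add_zero]⟩
  refine walkSums_induction (P := fun x s => (x ∈ Vtx Ep → hatd Ep wp a x ≤ s) ∧
      ∀ f ∈ F, x ∈ Vtx f.1 →
        ∃ y ∈ Vtx f.1 ∩ Vtx Ep, hatd Ep wp a y + hatd f.1 f.2 y x ≤ s) ?_ ?_ h
  · have h0 : hatd Ep wp a a ≤ 0 := (hatd_self hs.hp.nonneg).le
    exact ⟨fun _ => h0, of_mem ha h0⟩
  · rintro u v r - ⟨ihp, ihF⟩ (huv | ⟨f, hf, huv⟩)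
    · have hv : hatd Ep wp a v ≤ r + wd u v := by
        rw [hs.wd_p huv]
        linarith [ihp (hs.hp.left_mem huv), hs.hp.hatd_le_add_edge ha huv]
      exact ⟨fun _ => hv, of_mem (hs.hp.right_mem huv) hv⟩
    · have hfE := hs.hF f hf
      have hvf := hfE.right_mem huv
      obtain ⟨y, hy, hyr⟩ := ihF f hf (hfE.left_mem huv)
      have hyv : hatd Ep wp a y + hatd f.1 f.2 y v ≤ r + wd u v := by
        rw [hs.wd_F f hf huv]
        linarith [hfE.hatd_le_add_edge hy.1 huv]
      have hv : v ∈ Vtx Ep → hatd Ep wp a v ≤ r + wd u v := by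
        intro hv
        rw [hs.hatd_eq hf hy.1 hy.2 hvf hv] at hyv
        exact (hs.hp.triangle ha hy.2 hv).trans hyv
      refine ⟨hv, fun g hg hvg => ?_⟩
      by_cases hfg : f = g
      · subst hfg
        exact ⟨y, hy, hyv⟩
      · have hvp := hs.inter_sub f hf g hg hfg ⟨hvf, hvg⟩
        exact of_mem hvp (hv hvp) g hg hvg

theorem hatd_le_of_mem_inter (hs : GluingSetup Ep wp F wd) (hf : f ∈ F)
    (ha : a ∈ Vtx f.1 ∩ Vtx Ep) (hb : b ∈ Vtx f.1)
    (h : s ∈ walkSums (gluedEdge Ep F) wd a b) : hatd f.1 f.2 a b ≤ s := by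
  obtain ⟨y, hy, hys⟩ := (hs.bound_of_mem_walkSums ha.2 h).2 f hf hb
  rw [← hs.hatd_eq hf ha.1 ha.2 hy.1 hy.2] at hys
  exact ((hs.hF f hf).triangle ha.1 hy.1 hb).trans hys

theorem hatd_le_of_mem_member (hs : GluingSetup Ep wp F wd) (hf : f ∈ F) (ha : a ∈ Vtx f.1)
    (hb : b ∈ Vtx f.1) (h : s ∈ walkSums (gluedEdge Ep F) wd a b) :
    hatd f.1 f.2 a b ≤ s := by
  have hfE := hs.hF f hf
  -- Either the walk has stayed in `f`, or it left `f` through a vertex of `V_p`.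
  have key : (b ∈ Vtx f.1 ∧ hatd f.1 f.2 a b ≤ s) ∨ ∃ y ∈ Vtx f.1 ∩ Vtx Ep,
      ∃ t ∈ walkSums (gluedEdge Ep F) wd y b, hatd f.1 f.2 a y + t ≤ s := by
    refine walkSums_induction (P := fun b s => (b ∈ Vtx f.1 ∧ hatd f.1 f.2 a b ≤ s) ∨
      ∃ y ∈ Vtx f.1 ∩ Vtx Ep,
        ∃ t ∈ walkSums (gluedEdge Ep F) wd y b, hatd f.1 f.2 a y + t ≤ s) ?_ ?_ h
    · exact .inl ⟨ha, (hatd_self hfE.nonneg).le⟩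
    · rintro u v r - (⟨hu, hr⟩ | ⟨y, hy, t, ht, hr⟩) huv
      · by_cases hfuv : f.1 u v
        · refine .inl ⟨hfE.right_mem hfuv, ?_⟩
          rw [hs.wd_F f hf hfuv]
          linarith [hfE.hatd_le_add_edge ha hfuv]
        · have hup : u ∈ Vtx Ep := by
            rcases huv with h | ⟨g, hg, h⟩
            · exact hs.hp.left_mem h
            · refine hs.inter_sub f hf g hg ?_ ⟨hu, v, h⟩
              rintro rfl
              exact hfuv h
          exact .inr ⟨u, ⟨hu, hup⟩, 0 + wd u v, add_edge_mem_walkSums zero_mem_walkSums huv,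
            by linarith⟩
      · exact .inr ⟨y, hy, t + wd u v, add_edge_mem_walkSums ht huv, by linarith⟩
  rcases key with ⟨-, h⟩ | ⟨y, hy, t, ht, h⟩
  · exact h
  · linarith [hfE.triangle ha hy.1 hb, hs.hatd_le_of_mem_inter hf hy hb ht]

theorem exists_joined (hs : GluingSetup Ep wp F wd) (hx : x ∈ Vtx (gluedEdge Ep F)) :
    ∃ y ∈ Vtx Ep, Relation.ReflTransGen (gluedEdge Ep F) x y := by
  obtain ⟨z, h | ⟨f, hf, h⟩⟩ := hx
  · exact ⟨x, ⟨z, h⟩, .refl⟩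
  · obtain ⟨y, hyf, hyp⟩ := hs.meet f hf
    exact ⟨y, hyp, Relation.ReflTransGen.mono (fun _ _ h => .inr ⟨f, hf, h⟩) _ _
      (joined_iff_reflTransGen.mp ((hs.hF f hf).connected x ⟨z, h⟩ y hyf))⟩

theorem glued_connected (hs : GluingSetup Ep wp F wd) (hx : x ∈ Vtx (gluedEdge Ep F))
    (hy : y ∈ Vtx (gluedEdge Ep F)) : Joined (gluedEdge Ep F) x y := by
  obtain ⟨x', hx', hxx'⟩ := hs.exists_joined hx
  obtain ⟨y', hy', hyy'⟩ := hs.exists_joined hy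
  have hmid : Relation.ReflTransGen (gluedEdge Ep F) x' y' :=
    Relation.ReflTransGen.mono (fun _ _ h => .inl h) _ _
      (joined_iff_reflTransGen.mp (hs.hp.connected x' hx' y' hy'))
  have : Std.Symm (gluedEdge Ep F) := ⟨fun _ _ h => hs.glued_symm h⟩
  have hback : Relation.ReflTransGen (gluedEdge Ep F) y' y :=
    Relation.ReflTransGen.stdSymm.symm _ _ hyy'
  exact joined_iff_reflTransGen.mpr ((hxx'.trans hmid).trans hback)

theorem le_of_mem_walkSums (hs : GluingSetup Ep wp F wd) (hab : gluedEdge Ep F a b)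
    (h : s ∈ walkSums (gluedEdge Ep F) wd a b) : wd a b ≤ s := by
  rcases hab with hab | ⟨f, hf, hab⟩
  · rw [hs.wd_p hab, hs.hp.edge_eq hab]
    exact (hs.bound_of_mem_walkSums (hs.hp.left_mem hab) h).1 (hs.hp.right_mem hab)
  · have hfE := hs.hF f hf
    rw [hs.wd_F f hf hab, hfE.edge_eq hab]
    exact hs.hatd_le_of_mem_member hf (hfE.left_mem hab) (hfE.right_mem hab) h

end GluingSetup

/-- In the gluing setup, the glued function `d = p ∪ ⋃𝔉` is a graph
pseudometric on `E_d`, i.e. `d(xy) = d̂(x,y)` for every edge `xy ∈ E_d`. -/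
theorem gluing_graph_pseudometric (Ep : X → X → Prop) (wp : X → X → ℝ)
    (F : Set ((X → X → Prop) × (X → X → ℝ))) (wd : X → X → ℝ)
    (hs : GluingSetup Ep wp F wd) :
    IsGraphPseudometric (gluedEdge Ep F) wd := by
  refine ⟨fun a b => hs.glued_symm, ?_, ?_, fun a b => hs.glued_nonneg,
    fun x hx y hy => hs.glued_connected hx hy, ?_⟩
  · rintro a (h | ⟨f, hf, h⟩)
    · exact hs.hp.irrefl a h
    · exact (hs.hF f hf).irrefl a h
  · rintro a b (h | ⟨f, hf, h⟩)
    · rw [hs.wd_p h, hs.wd_p (hs.hp.symm h), hs.hp.wt_symm h]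
    · rw [hs.wd_F f hf h, hs.wd_F f hf ((hs.hF f hf).symm h), (hs.hF f hf).wt_symm h]
  · intro a b hab
    refine le_antisymm ?_ (hatd_le_of_edge (fun _ _ => hs.glued_nonneg) hab)
    exact le_csInf
      (walkSums_nonempty (hs.glued_connected ⟨b, hab⟩ ⟨a, hs.glued_symm hab⟩))
      fun _ h => hs.le_of_mem_walkSums hab h

end GraphMetricPaper
end

section
/- In the gluing setup, for every f ∈ 𝔉, every x ∈ V_f \ V_p, and every y ∈ V_p \ V_f, we have d̂(x,y) − ď(x,y) ≥ min{ Λ(x; V_f ∩ V_p), (1/2)·Λ(y; V_p ∩ V_f) }, where Λ(v;B) = inf{ d̂(a,v) + d̂(v,b) − d̂(a,b) : a,b ∈ B }. -/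
open scoped Classical

universe u

namespace GraphMetricPaper

variable {X : Type u}

/-- `HasWalk E d x y s`: some walk of `E` from `x` to `y` has weight `s`. -/
inductive HasWalk (E : X → X → Prop) (d : X → X → ℝ) (x : X) : X → ℝ → Prop
  | nil : HasWalk E d x x 0
  | snoc {y z : X} {s : ℝ} : HasWalk E d x y s → E y z → HasWalk E d x z (s + d y z)

theorem mem_walkSums_iff {E : X → X → Prop} {d : X → X → ℝ} {x y : X} {s : ℝ} :
    s ∈ walkSums E d x y ↔ HasWalk E d x y s := by
  constructor
  · rintro ⟨n, c, h0, hn, hE, rfl⟩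
    subst h0 hn
    induction n with
    | zero => simpa using HasWalk.nil
    | succ n ih =>
      rw [Finset.sum_range_succ]
      exact (ih fun i hi => hE i (by omega)).snoc (hE n (by omega))
  · intro h
    induction h with
    | nil => exact ⟨0, fun _ => x, rfl, rfl, by simp, by simp⟩
    | @snoc y z s _ hE ih =>
      obtain ⟨n, c, h0, hn, hc, rfl⟩ := ih
      have hlt : ∀ i, i ≤ n → Function.update c (n + 1) z i = c i := fun i hi =>
        Function.update_of_ne (by omega) _ _
      refine ⟨n + 1, Function.update c (n + 1) z, ?_, by simp, ?_, ?_⟩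
      · rw [hlt 0 (by omega), h0]
      · intro i hi
        rcases Nat.lt_succ_iff_lt_or_eq.mp hi with h | rfl
        · rw [hlt i (by omega), hlt (i + 1) (by omega)]
          exact hc i h
        · rw [hlt i le_rfl, Function.update_self, hn]
          exact hE
      · rw [Finset.sum_range_succ, hlt n le_rfl, Function.update_self, hn]
        congr 1
        refine Finset.sum_congr rfl fun i hi => ?_
        rw [Finset.mem_range] at hi
        rw [hlt i (by omega), hlt (i + 1) (by omega)]

theorem joined_iff_exists_hasWalk {E : X → X → Prop} (d : X → X → ℝ) {x y : X} :
    Joined E x y ↔ ∃ s, HasWalk E d x y s := by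
  simp only [← mem_walkSums_iff]
  constructor
  · rintro ⟨n, c, h0, hn, hE⟩
    exact ⟨_, n, c, h0, hn, hE, rfl⟩
  · rintro ⟨_, n, c, h0, hn, hE, -⟩
    exact ⟨n, c, h0, hn, hE⟩

namespace HasWalk

variable {E : X → X → Prop} {d : X → X → ℝ} {x y z : X} {s t : ℝ}

theorem trans (h₁ : HasWalk E d x y s) (h₂ : HasWalk E d y z t) : HasWalk E d x z (s + t) := by
  induction h₂ with
  | nil => simpa using h₁
  | snoc _ hE ih =>
    rw [← add_assoc]
    exact ih.snoc hE

theorem of_edge (h : E x y) : HasWalk E d x y (d x y) := by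
  simpa using HasWalk.nil.snoc h

theorem mono {G : X → X → Prop} {w : X → X → ℝ} (hE : ∀ ⦃a b⦄, E a b → G a b)
    (hd : ∀ ⦃a b⦄, E a b → w a b = d a b) (h : HasWalk E d x y s) : HasWalk G w x y s := by
  induction h with
  | nil => exact .nil
  | snoc _ h ih =>
    rw [← hd h]
    exact ih.snoc (hE h)

end HasWalk

/-- A connected graph `E` with a nonnegative symmetric weight `d` on its edges. -/
structure IsWeightedGraph (E : X → X → Prop) (d : X → X → ℝ) : Prop where
  symm : ∀ ⦃a b⦄, E a b → E b a
  wt_symm : ∀ ⦃a b⦄, E a b → d a b = d b a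
  nonneg : ∀ ⦃a b⦄, E a b → 0 ≤ d a b
  connected : ∀ x ∈ Vtx E, ∀ y ∈ Vtx E, Joined E x y

theorem IsGraphPseudometric.isWeightedGraph {E : X → X → Prop} {d : X → X → ℝ}
    (h : IsGraphPseudometric E d) : IsWeightedGraph E d :=
  ⟨h.symm, h.wt_symm, h.nonneg, h.connected⟩

namespace IsWeightedGraph

variable {E : X → X → Prop} {d : X → X → ℝ} {x y z : X} {s : ℝ}

theorem right_mem (h : IsWeightedGraph E d) (hE : E x y) : y ∈ Vtx E := ⟨x, h.symm hE⟩

theorem hasWalk_nonneg (h : IsWeightedGraph E d) (w : HasWalk E d x y s) : 0 ≤ s := by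
  induction w with
  | nil => exact le_rfl
  | snoc _ hE ih => exact add_nonneg ih (h.nonneg hE)

theorem hasWalk_symm (h : IsWeightedGraph E d) (w : HasWalk E d x y s) : HasWalk E d y x s := by
  induction w with
  | nil => exact .nil
  | snoc _ hE ih =>
    rw [add_comm, h.wt_symm hE]
    exact (HasWalk.of_edge (h.symm hE)).trans ih

theorem hatd_le (h : IsWeightedGraph E d) (w : HasWalk E d x y s) : hatd E d x y ≤ s :=
  csInf_le ⟨0, fun _ ht => h.hasWalk_nonneg (mem_walkSums_iff.mp ht)⟩ (mem_walkSums_iff.mpr w)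

theorem hatd_nonneg (h : IsWeightedGraph E d) (x y : X) : 0 ≤ hatd E d x y :=
  Real.sInf_nonneg fun _ ht => h.hasWalk_nonneg (mem_walkSums_iff.mp ht)

theorem hatd_self (h : IsWeightedGraph E d) (x : X) : hatd E d x x = 0 :=
  le_antisymm (h.hatd_le .nil) (h.hatd_nonneg x x)

theorem hatd_comm (h : IsWeightedGraph E d) (x y : X) : hatd E d x y = hatd E d y x := by
  unfold hatd
  congr 1
  ext t
  simp only [mem_walkSums_iff]
  exact ⟨h.hasWalk_symm, h.hasWalk_symm⟩

theorem le_hatd (h : IsWeightedGraph E d) (hx : x ∈ Vtx E) (hy : y ∈ Vtx E) {r : ℝ}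
    (hr : ∀ s, HasWalk E d x y s → r ≤ s) : r ≤ hatd E d x y := by
  obtain ⟨s, hs⟩ := (joined_iff_exists_hasWalk d).mp (h.connected x hx y hy)
  exact le_csInf ⟨s, mem_walkSums_iff.mpr hs⟩ fun t ht => hr t (mem_walkSums_iff.mp ht)

theorem hatd_triangle (h : IsWeightedGraph E d) (hx : x ∈ Vtx E) (hy : y ∈ Vtx E)
    (hz : z ∈ Vtx E) : hatd E d x z ≤ hatd E d x y + hatd E d y z := by
  rw [← sub_le_iff_le_add]
  refine h.le_hatd hx hy fun s hs => ?_
  rw [sub_le_comm]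
  refine h.le_hatd hy hz fun t ht => ?_
  linarith [h.hatd_le (hs.trans ht)]

theorem lam_le (h : IsWeightedGraph E d) {B : Set X} (hB : B ⊆ Vtx E) {v : X} (hv : v ∈ Vtx E)
    {a b : X} (ha : a ∈ B) (hb : b ∈ B) :
    Lam E d v B ≤ hatd E d a v + hatd E d v b - hatd E d a b := by
  refine csInf_le ⟨0, ?_⟩ ⟨a, ha, b, hb, rfl⟩
  rintro _ ⟨a, ha, b, hb, rfl⟩
  linarith [h.hatd_triangle (hB ha) hv (hB hb)]

theorem lam_nonneg (h : IsWeightedGraph E d) {B : Set X} (hB : B ⊆ Vtx E) {v : X}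
    (hv : v ∈ Vtx E) : 0 ≤ Lam E d v B := by
  refine Real.sInf_nonneg ?_
  rintro _ ⟨a, ha, b, hb, rfl⟩
  linarith [h.hatd_triangle (hB ha) hv (hB hb)]

end IsWeightedGraph

namespace GluingSetup

variable {Ep : X → X → Prop} {wp : X → X → ℝ} {F : Set ((X → X → Prop) × (X → X → ℝ))}
  {wd : X → X → ℝ} {f : (X → X → Prop) × (X → X → ℝ)} {u v : X} {s : ℝ}

theorem vtx_base_subset : Vtx Ep ⊆ Vtx (gluedEdge Ep F) := fun _ ⟨b, h⟩ => ⟨b, .inl h⟩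

theorem vtx_piece_subset (hf : f ∈ F) : Vtx f.1 ⊆ Vtx (gluedEdge Ep F) :=
  fun _ ⟨b, h⟩ => ⟨b, .inr ⟨f, hf, h⟩⟩

theorem hasWalk_base (hs : GluingSetup Ep wp F wd) (w : HasWalk Ep wp u v s) :
    HasWalk (gluedEdge Ep F) wd u v s :=
  w.mono (fun _ _ h => .inl h) hs.wd_p

theorem hasWalk_piece (hs : GluingSetup Ep wp F wd) (hf : f ∈ F) (w : HasWalk f.1 f.2 u v s) :
    HasWalk (gluedEdge Ep F) wd u v s :=
  w.mono (fun _ _ h => .inr ⟨f, hf, h⟩) (hs.wd_F f hf)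

theorem exists_hasWalk_to_base (hs : GluingSetup Ep wp F wd) (hu : u ∈ Vtx (gluedEdge Ep F)) :
    ∃ c ∈ Vtx Ep, ∃ s, HasWalk (gluedEdge Ep F) wd u c s ∧
      HasWalk (gluedEdge Ep F) wd c u s := by
  obtain ⟨b, h | ⟨f, hf, h⟩⟩ := hu
  · exact ⟨u, ⟨b, h⟩, 0, .nil, .nil⟩
  · obtain ⟨c, hcf, hcp⟩ := hs.meet f hf
    obtain ⟨s, w⟩ :=
      (joined_iff_exists_hasWalk f.2).mp ((hs.hF f hf).connected u ⟨b, h⟩ c hcf)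
    exact ⟨c, hcp, s, hs.hasWalk_piece hf w,
      hs.hasWalk_piece hf ((hs.hF f hf).isWeightedGraph.hasWalk_symm w)⟩

theorem isWeightedGraph (hs : GluingSetup Ep wp F wd) :
    IsWeightedGraph (gluedEdge Ep F) wd where
  symm := by
    rintro a b (h | ⟨f, hf, h⟩)
    · exact .inl (hs.hp.symm h)
    · exact .inr ⟨f, hf, (hs.hF f hf).symm h⟩
  wt_symm := by
    rintro a b (h | ⟨f, hf, h⟩)
    · rw [hs.wd_p h, hs.wd_p (hs.hp.symm h), hs.hp.wt_symm h]
    · rw [hs.wd_F f hf h, hs.wd_F f hf ((hs.hF f hf).symm h), (hs.hF f hf).wt_symm h]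
  nonneg := by
    rintro a b (h | ⟨f, hf, h⟩)
    · rw [hs.wd_p h]
      exact hs.hp.nonneg h
    · rw [hs.wd_F f hf h]
      exact (hs.hF f hf).nonneg h
  connected := by
    intro x hx y hy
    obtain ⟨a, ha, s, hxa, -⟩ := hs.exists_hasWalk_to_base hx
    obtain ⟨b, hb, t, -, hby⟩ := hs.exists_hasWalk_to_base hy
    obtain ⟨r, hab⟩ := (joined_iff_exists_hasWalk wp).mp (hs.hp.connected a ha b hb)
    exact (joined_iff_exists_hasWalk wd).mpr ⟨_, (hxa.trans (hs.hasWalk_base hab)).trans hby⟩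

theorem hatd_piece_eq_hatd_base (hs : GluingSetup Ep wp F wd) (hf : f ∈ F)
    (hu : u ∈ Vtx f.1 ∩ Vtx Ep) (hv : v ∈ Vtx f.1 ∩ Vtx Ep) :
    hatd f.1 f.2 u v = hatd Ep wp u v := by
  rcases eq_or_ne u v with rfl | hne
  · rw [(hs.hF f hf).isWeightedGraph.hatd_self, hs.hp.isWeightedGraph.hatd_self]
  · exact hs.agree f hf u hu v hv hne

/-- A glued edge leaving the piece `f` starts in the base. -/
theorem mem_base_of_edge (hs : GluingSetup Ep wp F wd) (hf : f ∈ F) (hu : u ∈ Vtx f.1)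
    (h : gluedEdge Ep F u v) (hne : ¬ f.1 u v) : u ∈ Vtx Ep := by
  rcases h with h | ⟨g, hg, h⟩
  · exact ⟨v, h⟩
  · have hfg : f ≠ g := by
      rintro rfl
      exact hne h
    exact hs.inter_sub f hf g hg hfg ⟨hu, v, h⟩

/-- The weight of a walk starting in the base is bounded below by the distance in the base, or
by a distance in the base followed by a distance in a piece. -/
theorem le_of_hasWalk_base (hs : GluingSetup Ep wp F wd) (hu : u ∈ Vtx Ep)
    (w : HasWalk (gluedEdge Ep F) wd u v s) :
    (v ∈ Vtx Ep → hatd Ep wp u v ≤ s) ∧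
      ∀ f ∈ F, v ∈ Vtx f.1 → ∃ c ∈ Vtx f.1 ∩ Vtx Ep, hatd Ep wp u c + hatd f.1 f.2 c v ≤ s := by
  have hp := hs.hp.isWeightedGraph
  have key : ∀ {z : X} {t : ℝ}, z ∈ Vtx Ep → hatd Ep wp u z ≤ t → ∀ f ∈ F, z ∈ Vtx f.1 →
      ∃ c ∈ Vtx f.1 ∩ Vtx Ep, hatd Ep wp u c + hatd f.1 f.2 c z ≤ t := by
    intro z t hz ht f hf hzf
    refine ⟨z, ⟨hzf, hz⟩, ?_⟩
    rwa [(hs.hF f hf).isWeightedGraph.hatd_self, add_zero]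
  induction w with
  | nil =>
    have h0 := (hp.hatd_self u).le
    exact ⟨fun _ => h0, key hu h0⟩
  | @snoc y z s _ hE ih =>
    rcases hE with h | ⟨f, hf, h⟩
    · have hy : y ∈ Vtx Ep := ⟨z, h⟩
      have hz := hp.right_mem h
      have hle : hatd Ep wp u z ≤ s + wd y z := by
        rw [hs.wd_p h, hs.hp.edge_eq h]
        linarith [ih.1 hy, hp.hatd_triangle hu hy hz]
      exact ⟨fun _ => hle, key hz hle⟩
    · have hfw := (hs.hF f hf).isWeightedGraph
      have hy : y ∈ Vtx f.1 := ⟨z, h⟩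
      have hz := hfw.right_mem h
      obtain ⟨c, hc, hcs⟩ := ih.2 f hf hy
      have hle : hatd Ep wp u c + hatd f.1 f.2 c z ≤ s + wd y z := by
        rw [hs.wd_F f hf h, (hs.hF f hf).edge_eq h]
        linarith [hfw.hatd_triangle hc.1 hy hz]
      have hbase : z ∈ Vtx Ep → hatd Ep wp u z ≤ s + wd y z := by
        intro hzp
        rw [hs.hatd_piece_eq_hatd_base hf hc ⟨hz, hzp⟩] at hle
        linarith [hp.hatd_triangle hu hc.2 hzp]
      refine ⟨hbase, fun g hg hzg => ?_⟩
      rcases eq_or_ne f g with rfl | hfg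
      · exact ⟨c, hc, hle⟩
      · have hzp := hs.inter_sub f hf g hg hfg ⟨hz, hzg⟩
        exact key hzp (hbase hzp) g hg hzg

theorem hatd_base_le (hs : GluingSetup Ep wp F wd) (hu : u ∈ Vtx Ep) (hv : v ∈ Vtx Ep) :
    hatd Ep wp u v ≤ hatd (gluedEdge Ep F) wd u v :=
  hs.isWeightedGraph.le_hatd (vtx_base_subset hu) (vtx_base_subset hv) fun _ w =>
    (hs.le_of_hasWalk_base hu w).1 hv

/-- The weight of a walk starting in the piece `f` is bounded below by the distance in `f`, or
by a distance in `f` followed by a distance in the glued graph. -/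
theorem le_of_hasWalk_piece (hs : GluingSetup Ep wp F wd) (hf : f ∈ F) (hu : u ∈ Vtx f.1)
    (w : HasWalk (gluedEdge Ep F) wd u v s) :
    (v ∈ Vtx f.1 → hatd f.1 f.2 u v ≤ s) ∧
      (v ∉ Vtx f.1 → ∃ c ∈ Vtx f.1 ∩ Vtx Ep,
        hatd f.1 f.2 u c + hatd (gluedEdge Ep F) wd c v ≤ s) := by
  have hfw := (hs.hF f hf).isWeightedGraph
  have hd := hs.isWeightedGraph
  induction w with
  | nil => exact ⟨fun _ => (hfw.hatd_self u).le, fun h => absurd hu h⟩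
  | @snoc y z s _ hE ih =>
    have hyz := hd.hatd_le (HasWalk.of_edge hE)
    have hyV : y ∈ Vtx (gluedEdge Ep F) := ⟨z, hE⟩
    have hzV := hd.right_mem hE
    by_cases hy : y ∈ Vtx f.1
    · have hys := ih.1 hy
      constructor
      · intro hz
        suffices hatd f.1 f.2 y z ≤ wd y z by linarith [hfw.hatd_triangle hu hy hz]
        by_cases h : f.1 y z
        · rw [hs.wd_F f hf h, (hs.hF f hf).edge_eq h]
        · have hyp := hs.mem_base_of_edge hf hy hE h
          have hzp := hs.mem_base_of_edge hf hz (hd.symm hE) fun hzy => h (hfw.symm hzy)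
          rw [hs.hatd_piece_eq_hatd_base hf ⟨hy, hyp⟩ ⟨hz, hzp⟩]
          exact (hs.hatd_base_le hyp hzp).trans hyz
      · intro hz
        have hyp := hs.mem_base_of_edge hf hy hE fun h => hz (hfw.right_mem h)
        exact ⟨y, ⟨hy, hyp⟩, by linarith⟩
    · obtain ⟨c, hc, hcs⟩ := ih.2 hy
      have htri := hd.hatd_triangle (vtx_base_subset hc.2) hyV hzV
      refine ⟨fun hz => ?_, fun _ => ⟨c, hc, by linarith⟩⟩
      have hzp := hs.mem_base_of_edge hf hz (hd.symm hE) fun h => hy (hfw.right_mem h)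
      have hcz := hs.hatd_base_le hc.2 hzp
      rw [← hs.hatd_piece_eq_hatd_base hf hc ⟨hz, hzp⟩] at hcz
      linarith [hfw.hatd_triangle hu hc.1 hz]

theorem hatd_piece_le (hs : GluingSetup Ep wp F wd) (hf : f ∈ F) (hu : u ∈ Vtx f.1)
    (hv : v ∈ Vtx f.1) : hatd f.1 f.2 u v ≤ hatd (gluedEdge Ep F) wd u v :=
  hs.isWeightedGraph.le_hatd (vtx_piece_subset hf hu) (vtx_piece_subset hf hv) fun _ w =>
    (hs.le_of_hasWalk_piece hf hu w).1 hv

theorem edge_le_hatd (hs : GluingSetup Ep wp F wd) (h : gluedEdge Ep F u v) :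
    wd u v ≤ hatd (gluedEdge Ep F) wd u v := by
  rcases h with h | ⟨f, hf, h⟩
  · rw [hs.wd_p h, hs.hp.edge_eq h]
    exact hs.hatd_base_le ⟨v, h⟩ (hs.hp.isWeightedGraph.right_mem h)
  · rw [hs.wd_F f hf h, (hs.hF f hf).edge_eq h]
    exact hs.hatd_piece_le hf ⟨v, h⟩ ((hs.hF f hf).isWeightedGraph.right_mem h)

theorem hasWalk_split (hs : GluingSetup Ep wp F wd) (hf : f ∈ F) (hu : u ∈ Vtx f.1)
    (w : HasWalk (gluedEdge Ep F) wd u v s) :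
    v ∈ Vtx f.1 ∨ ∃ c ∈ Vtx f.1 ∩ Vtx Ep, ∃ s₁ s₂, HasWalk (gluedEdge Ep F) wd u c s₁ ∧
      HasWalk (gluedEdge Ep F) wd c v s₂ ∧ s₁ + s₂ = s := by
  induction w with
  | nil => exact .inl hu
  | @snoc y z s w hE ih =>
    rcases ih with hy | ⟨c, hc, s₁, s₂, w₁, w₂, rfl⟩
    · by_cases hz : z ∈ Vtx f.1
      · exact .inl hz
      · have hyp := hs.mem_base_of_edge hf hy hE fun h =>
          hz ((hs.hF f hf).isWeightedGraph.right_mem h)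
        exact .inr ⟨y, ⟨hy, hyp⟩, s, _, w, .of_edge hE, rfl⟩
    · exact .inr ⟨c, hc, s₁, _, w₁, w₂.snoc hE, (add_assoc _ _ _).symm⟩

/-- Distances from the piece `f` to vertices outside its interior are realized, up to any
`ε > 0`, through the intersection of `f` with the base. -/
theorem exists_hatd_add_hatd_le (hs : GluingSetup Ep wp F wd) (hf : f ∈ F) (hu : u ∈ Vtx f.1)
    (hv : v ∈ Vtx (gluedEdge Ep F)) (hvf : v ∈ Vtx f.1 → v ∈ Vtx Ep) {ε : ℝ} (hε : 0 < ε) :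
    ∃ c ∈ Vtx f.1 ∩ Vtx Ep, hatd (gluedEdge Ep F) wd u c + hatd (gluedEdge Ep F) wd c v ≤
      hatd (gluedEdge Ep F) wd u v + ε := by
  have hd := hs.isWeightedGraph
  by_contra! hcon
  refine absurd (hd.le_hatd (vtx_piece_subset hf hu) hv fun s w => ?_)
    (not_le.mpr (lt_add_of_pos_right (hatd (gluedEdge Ep F) wd u v) hε))
  rcases hs.hasWalk_split hf hu w with h | ⟨c, hc, s₁, s₂, w₁, w₂, rfl⟩
  · have := hcon v ⟨h, hvf h⟩
    rw [hd.hatd_self, add_zero] at this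
    exact absurd this (not_lt.mpr (le_add_of_nonneg_right hε.le))
  · linarith [hcon c hc, hd.hatd_le w₁, hd.hatd_le w₂]

end GluingSetup

/-- In the gluing setup, for `f ∈ 𝔉`, `x ∈ V_f \ V_p` and
`y ∈ V_p \ V_f`: `d̂(x,y) − ď(x,y) ≥ min {Λ(x; V_f ∩ V_p), (1/2)·Λ(y; V_p ∩ V_f)}`. -/
theorem gluing_floppiness_bound₁ (Ep : X → X → Prop) (wp : X → X → ℝ)
    (F : Set ((X → X → Prop) × (X → X → ℝ))) (wd : X → X → ℝ)
    (hs : GluingSetup Ep wp F wd)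
    (f : (X → X → Prop) × (X → X → ℝ)) (hf : f ∈ F)
    (x : X) (hx : x ∈ Vtx f.1 \ Vtx Ep) (y : X) (hy : y ∈ Vtx Ep \ Vtx f.1) :
    min (Lam (gluedEdge Ep F) wd x (Vtx f.1 ∩ Vtx Ep))
        ((1 / 2) * Lam (gluedEdge Ep F) wd y (Vtx Ep ∩ Vtx f.1)) ≤
      hatd (gluedEdge Ep F) wd x y - checkd (gluedEdge Ep F) wd x y := by
  have hd := hs.isWeightedGraph
  rw [Set.inter_comm (Vtx Ep)]
  set B := Vtx f.1 ∩ Vtx Ep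
  have hB : B ⊆ Vtx (gluedEdge Ep F) := fun _ h => GluingSetup.vtx_base_subset h.2
  have hxV : x ∈ Vtx (gluedEdge Ep F) := GluingSetup.vtx_piece_subset hf hx.1
  have hyV : y ∈ Vtx (gluedEdge Ep F) := GluingSetup.vtx_base_subset hy.1
  have hminx := min_le_left (Lam (gluedEdge Ep F) wd x B) ((1 / 2) * Lam (gluedEdge Ep F) wd y B)
  have hminy := min_le_right (Lam (gluedEdge Ep F) wd x B) ((1 / 2) * Lam (gluedEdge Ep F) wd y B)
  have hy0 := hd.lam_nonneg hB hyV
  rw [le_sub_comm]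
  refine csSup_le ⟨0, .inl rfl⟩ ?_
  rintro r (rfl | ⟨a, b, hab, rfl⟩) <;> refine le_of_forall_pos_le_add fun ε hε => ?_
  · obtain ⟨c, hc, hxy⟩ := hs.exists_hatd_add_hatd_le hf hx.1 hyV (fun _ => hy.1) hε
    have hΛ := hd.lam_le hB hyV hc hc
    rw [hd.hatd_self, hd.hatd_comm y c] at hΛ
    linarith [hd.hatd_nonneg x c]
  · obtain ⟨c, hc, hxy⟩ := hs.exists_hatd_add_hatd_le hf hx.1 hyV (fun _ => hy.1) (half_pos hε)
    have haV : a ∈ Vtx (gluedEdge Ep F) := ⟨b, hab⟩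
    have hbV := hd.right_mem hab
    have hedge := hs.edge_le_hatd hab
    by_cases h : f.1 a b
    · have hb := (hs.hF f hf).isWeightedGraph.right_mem h
      obtain ⟨e, he, hby⟩ := hs.exists_hatd_add_hatd_le hf hb hyV (fun _ => hy.1) (half_pos hε)
      have hΛ := hd.lam_le hB hyV hc he
      rw [hd.hatd_comm b e, hd.hatd_comm e y, hd.hatd_comm b y] at hby
      linarith [hd.hatd_triangle haV hxV hbV, hd.hatd_triangle hxV (hB hc) hbV,
        hd.hatd_triangle (hB hc) (hB he) hbV]
    · obtain ⟨e, he, hxa⟩ := hs.exists_hatd_add_hatd_le hf hx.1 haV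
        (fun ha => hs.mem_base_of_edge hf ha hab h) (half_pos hε)
      have hΛ := hd.lam_le hB hxV he hc
      rw [hd.hatd_comm x e, hd.hatd_comm e a, hd.hatd_comm x a] at hxa
      linarith [hd.hatd_triangle haV (hB he) hbV, hd.hatd_triangle (hB he) (hB hc) hbV,
        hd.hatd_triangle (hB hc) hyV hbV]

end GraphMetricPaper
end
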